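/- arXiv:1605.08261 — 3 statements merged into one kernel-verified Lean document; each statement's English description precedes it below -/
import Mathlib

section
/- Consider a single task with solution τ uniform on {−1,+1} and a finite ground set O of workers, where worker w has error probability p_w ∈ [0,1]; for G ⊆ O, let a(G) = (a_w)_{w∈G} be {−1,+1}-valued answers, conditionally independent given τ, with P(a_w = τ) = 1 − p_w and P(a_w = −τ) = p_w. Then the set function G ↦ I(a(G); τ) is submodular: for all G₂ ⊆ G₁ ⊆ O and every γ ∈ O \ G₁, I(a(G₂ ∪ {γ}); τ) − I(a(G₂); τ) ≥ I(a(G₁ ∪ {γ}); τ) − I(a(G₁); τ). -/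
/-!
Write `x = P(α | τ = +1)` and `y = P(α | τ = −1)` for an answer vector `α`. The mutual information
is `∑ α, φ(x, y)` for the function `φ` called `miTerm` below. One further worker with error
probability `p` splits `(x, y)` into `((1-p)x, py)` and `(px, (1-p)y)`, so the marginal gain of that
worker is again a sum over answer vectors, of `g(x, y) = φ((1-p)x, py) + φ(px, (1-p)y) - φ(x, y)`.

In `g` the terms `x log x` and `y log y` cancel, which leaves a linear function of `(x, y)` plus
`hom A B / 2`, where `A = (1-p)x + py`, `B = px + (1-p)y` and
`hom A B = (A+B) log (A+B) - A log A - B log B`. By the log-sum inequality, `hom` is superadditive,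
and hence so is `g`. Enlarging the set of workers by one splits each `(x, y)` into two summands, and
superadditivity of `g` says that the gain does not increase. Adding workers to `G₂` one at a time
gives the claim.
-/

open scoped Classical

/-- Probability of the answer vector `α` given the task solution `τ = s`
(`true` codes `+1`, `false` codes `−1`): answers are conditionally independent
and worker `i` errs with probability `q i`. -/
noncomputable def condP {ι : Type*} [Fintype ι] (q : ι → ℝ) (s : Bool) (α : ι → Bool) : ℝ :=
  ∏ i, if α i = s then 1 - q i else q i

/-- Unconditional probability of the answer vector `α`, for `τ` uniform on `{±1}`. -/
noncomputable def ansP {ι : Type*} [Fintype ι] (q : ι → ℝ) (α : ι → Bool) : ℝ :=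
  (condP q true α + condP q false α) / 2

/-- Entropy `H(a)` of the answer vector. -/
noncomputable def ansH {ι : Type*} [Fintype ι] (q : ι → ℝ) : ℝ :=
  -∑ α : ι → Bool, ansP q α * Real.log (ansP q α)

/-- Conditional entropy `H(a | τ)` of the answer vector given the task solution. -/
noncomputable def ansCondH {ι : Type*} [Fintype ι] (q : ι → ℝ) : ℝ :=
  -(1/2) * ∑ α : ι → Bool, condP q true α * Real.log (condP q true α)
    - (1/2) * ∑ α : ι → Bool, condP q false α * Real.log (condP q false α)

/-- Mutual information `I(a; τ) = H(a) − H(a|τ)`. -/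
noncomputable def MI {ι : Type*} [Fintype ι] (q : ι → ℝ) : ℝ := ansH q - ansCondH q

/-- Mutual information between `τ` and the answers of the subset `G` of workers. -/
noncomputable def MIset {O : Type*} [Fintype O] (p : O → ℝ) (G : Finset O) : ℝ :=
  MI (fun w : ↥G => p ↑w)

/-- Posterior probability `P(τ = 1 | a = α)`. -/
noncomputable def post {ι : Type*} [Fintype ι] (q : ι → ℝ) (α : ι → Bool) : ℝ :=
  (condP q true α / 2) / ansP q α

/-- Binary entropy function. -/
noncomputable def Hb (p : ℝ) : ℝ := -(p * Real.log p) - (1 - p) * Real.log (1 - p)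

/-- The sum over all answer vectors `α` of `ψ (P(α | τ = +1)) (P(α | τ = −1))`. -/
noncomputable def condSum {ι : Type*} [Fintype ι] (ψ : ℝ → ℝ → ℝ) (q : ι → ℝ) : ℝ :=
  ∑ α : ι → Bool, ψ (condP q true α) (condP q false α)

/-- The contribution to the mutual information of an answer vector with conditional probabilities
`x` and `y` given `τ = +1` and `τ = −1`. -/
noncomputable def miTerm (x y : ℝ) : ℝ :=
  -((x + y) / 2 * Real.log ((x + y) / 2)) + x * Real.log x / 2 + y * Real.log y / 2

/-- The sum of `ψ` over the two summands into which a worker with error probability `p` splits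
`(x, y)`. -/
def splitSum (p : ℝ) (ψ : ℝ → ℝ → ℝ) (x y : ℝ) : ℝ :=
  ψ ((1 - p) * x) (p * y) + ψ (p * x) ((1 - p) * y)

theorem MI_eq_condSum {ι : Type*} [Fintype ι] (q : ι → ℝ) : MI q = condSum miTerm q := by
  simp only [MI, ansH, ansCondH, condSum, miTerm, ansP, Finset.sum_add_distrib,
    Finset.sum_neg_distrib, ← Finset.sum_div]
  ring

theorem condSum_equiv {ι κ : Type*} [Fintype ι] [Fintype κ] (e : ι ≃ κ) (ψ : ℝ → ℝ → ℝ)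
    (q : κ → ℝ) : condSum ψ (fun i => q (e i)) = condSum ψ q := by
  have h (s : Bool) (α : ι → Bool) :
      condP (fun i => q (e i)) s α = condP q s (e.arrowCongr (Equiv.refl Bool) α) := by
    unfold condP
    exact Fintype.prod_equiv e _ _ (fun i => by simp)
  unfold condSum
  exact Fintype.sum_equiv (e.arrowCongr (Equiv.refl Bool)) _ _ (fun α => by rw [h, h])

theorem condSum_option {ι : Type*} [Fintype ι] (ψ : ℝ → ℝ → ℝ) (q : Option ι → ℝ) :
    condSum ψ q = condSum (splitSum (q none) ψ) (fun i => q (some i)) := by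
  unfold condSum
  have e := Fintype.sum_equiv (Equiv.piOptionEquivProd (β := fun _ : Option ι => Bool)).symm
    _ (fun α => ψ (condP q true α) (condP q false α)) (fun _ => rfl)
  rw [Fintype.sum_prod_type, Fintype.sum_bool, ← Finset.sum_add_distrib] at e
  -- The two sides carry different decidability instances, for `Option ι` and for a general type.
  refine Eq.trans (by convert e.symm) ?_
  refine Finset.sum_congr rfl fun α _ => ?_
  simp [condP, splitSum, Fintype.prod_option, Equiv.piOptionEquivProd]
  rfl

theorem condSum_insert {O : Type*} (p : O → ℝ) (ψ : ℝ → ℝ → ℝ)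
    (G : Finset O) (γ : O) (hγ : γ ∉ G) :
    condSum ψ (fun w : ↥(insert γ G) => p w)
      = condSum (splitSum (p γ) ψ) (fun w : ↥G => p w) := by
  have h := condSum_equiv (Finset.subtypeInsertEquivOption hγ).symm ψ
    (fun w : ↥(insert γ G) => p w)
  rw [← h, condSum_option]
  rfl

/-- The tangent inequality `log u ≤ u - 1` at `u = s A / (a S)`, multiplied by `a`. -/
theorem mul_log_tangent {a s A S : ℝ} (ha : 0 ≤ a) (has : a ≤ s) (haA : a ≤ A) (hsS : s ≤ S) :
    a * Real.log s - a * Real.log a ≤ a * Real.log S - a * Real.log A + (s * A / S - a) := by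
  rcases ha.eq_or_lt with rfl | ha
  · have : 0 ≤ s * A / S := div_nonneg (mul_nonneg has haA) (has.trans hsS)
    simpa using this
  · have hs : 0 < s := by linarith
    have hA : 0 < A := by linarith
    have hS : 0 < S := by linarith
    have h := Real.log_le_sub_one_of_pos (show 0 < s * A / (a * S) by positivity)
    rw [Real.log_div (by positivity) (by positivity), Real.log_mul hs.ne' hA.ne',
      Real.log_mul ha.ne' hS.ne'] at h
    have h2 := mul_le_mul_of_nonneg_left h ha.le
    have h3 : a * (s * A / (a * S) - 1) = s * A / S - a := by field_simp
    linarith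

/-- The function `(A + B) log (A + B) - A log A - B log B`, that is, `A + B` times the binary
entropy of `A / (A + B)`. -/
noncomputable def hom (A B : ℝ) : ℝ :=
  (A + B) * Real.log (A + B) - A * Real.log A - B * Real.log B

/-- The log-sum inequality: `hom` is superadditive. -/
theorem hom_superadd {a b c d : ℝ} (ha : 0 ≤ a) (hb : 0 ≤ b) (hc : 0 ≤ c) (hd : 0 ≤ d) :
    hom a b + hom c d ≤ hom (a + c) (b + d) := by
  have h1 := mul_log_tangent (s := a + b) (A := a + c) (S := a + c + (b + d)) ha
    (by linarith) (by linarith) (by linarith)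
  have h2 := mul_log_tangent (s := a + b) (A := b + d) (S := a + c + (b + d)) hb
    (by linarith) (by linarith) (by linarith)
  have h3 := mul_log_tangent (s := c + d) (A := a + c) (S := a + c + (b + d)) hc
    (by linarith) (by linarith) (by linarith)
  have h4 := mul_log_tangent (s := c + d) (A := b + d) (S := a + c + (b + d)) hd
    (by linarith) (by linarith) (by linarith)
  have h5 : (a + b) * (a + c) / (a + c + (b + d)) + (a + b) * (b + d) / (a + c + (b + d))
      + (c + d) * (a + c) / (a + c + (b + d)) + (c + d) * (b + d) / (a + c + (b + d))
      = a + b + c + d := by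
    rw [← add_div, ← add_div, ← add_div]
    by_cases hS : a + c + (b + d) = 0
    · rw [hS, div_zero]
      linarith
    · rw [div_eq_iff hS]
      ring
  unfold hom
  linarith

theorem mul_mul_log_mul (p x : ℝ) :
    p * x * Real.log (p * x) = x * (p * Real.log p) + p * (x * Real.log x) := by
  have h := Real.negMulLog_mul p x
  simp only [Real.negMulLog] at h
  linarith

/-- The marginal gain `splitSum p miTerm - miTerm` is linear in `(x, y)` up to `hom / 2`. -/
theorem gain_eq (p x y : ℝ) :
    splitSum p miTerm x y - miTerm x y
      = (x + y) / 2 * (p * Real.log p + (1 - p) * Real.log (1 - p))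
        + hom ((1 - p) * x + p * y) (p * x + (1 - p) * y) / 2 := by
  obtain ⟨c, half⟩ : ∃ c : ℝ, ∀ z : ℝ, z / 2 * Real.log (z / 2)
      = z * c + 1 / 2 * (z * Real.log z) :=
    ⟨1 / 2 * Real.log (1 / 2), fun z => by
      rw [← mul_mul_log_mul, show 1 / 2 * z = z / 2 by ring]⟩
  have hs : (1 - p) * x + p * y + (p * x + (1 - p) * y) = x + y := by ring
  simp only [splitSum, miTerm, hom, half, mul_mul_log_mul, hs]
  ring

theorem gain_superadd {p q x y : ℝ} (hp : 0 ≤ p ∧ p ≤ 1) (hq : 0 ≤ q ∧ q ≤ 1)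
    (hx : 0 ≤ x) (hy : 0 ≤ y) :
    splitSum q (fun x y => splitSum p miTerm x y - miTerm x y) x y
      ≤ splitSum p miTerm x y - miTerm x y := by
  have hp' : 0 ≤ 1 - p := by linarith
  have hq' : 0 ≤ 1 - q := by linarith
  obtain ⟨hp, -⟩ := hp
  obtain ⟨hq, -⟩ := hq
  have h := hom_superadd
    (a := (1 - p) * ((1 - q) * x) + p * (q * y)) (b := p * ((1 - q) * x) + (1 - p) * (q * y))
    (c := (1 - p) * (q * x) + p * ((1 - q) * y)) (d := p * (q * x) + (1 - p) * ((1 - q) * y))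
    (by positivity) (by positivity) (by positivity) (by positivity)
  rw [show (1 - p) * ((1 - q) * x) + p * (q * y) + ((1 - p) * (q * x) + p * ((1 - q) * y))
      = (1 - p) * x + p * y by ring,
    show p * ((1 - q) * x) + (1 - p) * (q * y) + (p * (q * x) + (1 - p) * ((1 - q) * y))
      = p * x + (1 - p) * y by ring] at h
  simp only [gain_eq]
  unfold splitSum
  linarith

theorem condP_nonneg {ι : Type*} [Fintype ι] {q : ι → ℝ} (hq : ∀ i, 0 ≤ q i ∧ q i ≤ 1)
    (s : Bool) (α : ι → Bool) : 0 ≤ condP q s α := by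
  refine Finset.prod_nonneg fun i _ => ?_
  have := hq i
  split_ifs <;> linarith

theorem MIset_gain {O : Type*} [Fintype O] (p : O → ℝ) (G : Finset O) (γ : O) (hγ : γ ∉ G) :
    MIset p (insert γ G) - MIset p G
      = condSum (fun x y => splitSum (p γ) miTerm x y - miTerm x y) (fun w : ↥G => p w) := by
  rw [MIset, MIset, MI_eq_condSum, MI_eq_condSum, condSum_insert p miTerm G γ hγ]
  simp only [condSum, Finset.sum_sub_distrib]

/-- The diminishing-returns inequality when the set of workers grows by one worker `δ`. -/
theorem MIset_gain_insert_le {O : Type*} [Fintype O] (p : O → ℝ)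
    (hp : ∀ w, 0 ≤ p w ∧ p w ≤ 1) (G : Finset O) (γ δ : O) (hδ : δ ∉ G) (hγ : γ ∉ insert δ G) :
    MIset p (insert γ (insert δ G)) - MIset p (insert δ G)
      ≤ MIset p (insert γ G) - MIset p G := by
  rw [MIset_gain p _ γ hγ, MIset_gain p G γ (fun h => hγ (Finset.mem_insert_of_mem h)),
    condSum_insert p _ G δ hδ]
  have hG (w : ↥G) : 0 ≤ p w ∧ p w ≤ 1 := hp w
  exact Finset.sum_le_sum fun α _ => gain_superadd (hp γ) (hp δ)
    (condP_nonneg hG _ _) (condP_nonneg hG _ _)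

/-- Submodularity of the mutual information: for worker sets `G₂ ⊆ G₁` and a
worker `γ ∉ G₁`, the marginal gain of adding `γ` to `G₂` is at least the
marginal gain of adding `γ` to `G₁`. -/
theorem mutualInformation_submodular {O : Type*} [Fintype O] (p : O → ℝ)
    (hp : ∀ w, 0 ≤ p w ∧ p w ≤ 1) (G₁ G₂ : Finset O) (h21 : G₂ ⊆ G₁)
    (γ : O) (hγ : γ ∉ G₁) :
    MIset p (insert γ G₂) - MIset p G₂ ≥ MIset p (insert γ G₁) - MIset p G₁ := by
  have key (D : Finset O) : γ ∉ D ∪ G₂ →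
      MIset p (insert γ (D ∪ G₂)) - MIset p (D ∪ G₂) ≤ MIset p (insert γ G₂) - MIset p G₂ := by
    induction D using Finset.induction_on with
    | empty => intro _; rw [Finset.empty_union]
    | insert δ D _ ih =>
      rw [Finset.insert_union]
      intro h
      have ih' := ih fun h' => h (Finset.mem_insert_of_mem h')
      by_cases hδ : δ ∈ D ∪ G₂
      · rwa [Finset.insert_eq_of_mem hδ]
      · exact (MIset_gain_insert_le p hp _ γ δ hδ h).trans ih'
  have h := key G₁
  rw [Finset.union_eq_left.mpr h21] at h
  exact h hγ
end

section
/- Let M be a matroid on a finite ground set O and let f : 2^O → ℝ be monotone nondecreasing (f(A) ≤ f(B) whenever A ⊆ B), submodular (f(A∪B) + f(A∩B) ≤ f(A) + f(B) for all A, B ⊆ O), and satisfy f(∅) = 0. Consider the greedy procedure that starts from G⁰ = ∅ and, at each step i, sets G^i = G^{i−1} ∪ {g_i} where g_i is an element of O \ G^{i−1} maximizing f(G^{i−1} ∪ {g}) among all g such that G^{i−1} ∪ {g} is independent in M, stopping when no such element exists. Then the output G of the greedy procedure is independent in M and satisfies f(G) ≥ (1/2) · max { f(S) : S independent in M }. 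-/
/-!
Write `Gᵢ` for the set of the first `i` greedy picks and `G` for the output. Given an independent
set `S` with `k + 1` elements, exchange against `Gₖ` yields `x ∈ S \ Gₖ` that was addable at step
`k`. By submodularity, putting `x` back into `G ∪ (S \ {x})` gains at most
`f (Gₖ ∪ {x}) - f Gₖ`, which by the greedy choice is at most `f Gₖ₊₁ - f Gₖ`. Induction on `k`
telescopes these gains into `f (G ∪ S) ≤ f G + f Gₖ` for every independent `S` with at most `k`
elements (`greedy_union_le`). Since `G` is a maximal independent set, it has at least as many
elements as `S`, so `k = |G|` is allowed and `f S ≤ f (G ∪ S) ≤ 2 f G`.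
-/

lemma toFinset_take_succ {α : Type*} [DecidableEq α] (L : List α) (i : ℕ) (hi : i < L.length) :
    (L.take (i + 1)).toFinset = insert (L.get ⟨i, hi⟩) (L.take i).toFinset := by
  rw [List.take_succ_eq_append_getElem hi, List.toFinset_append, Finset.union_comm]
  rfl

/-- The telescoped bound: an independent set with at most `k` elements increases the value of the
greedy output by at most the value of the first `k` picks. -/
lemma greedy_union_le {α : Type*} [DecidableEq α]
    (Indep : Finset α → Prop)
    (h_down : ∀ ⦃A B : Finset α⦄, Indep B → A ⊆ B → Indep A)
    (h_exch : ∀ ⦃A B : Finset α⦄, Indep A → Indep B → B.card < A.card →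
      ∃ x ∈ A \ B, Indep (insert x B))
    (f : Finset α → ℝ)
    (h_mono : ∀ ⦃A B : Finset α⦄, A ⊆ B → f A ≤ f B)
    (h_sub : ∀ A B : Finset α, f (A ∪ B) + f (A ∩ B) ≤ f A + f B)
    (h_zero : f ∅ = 0)
    (L : List α)
    (hind : ∀ i ≤ L.length, Indep (L.take i).toFinset)
    (hgreedy : ∀ i (hi : i < L.length),
      ∀ g, g ∉ (L.take i).toFinset → Indep (insert g (L.take i).toFinset) →
        f (insert g (L.take i).toFinset) ≤
          f (insert (L.get ⟨i, hi⟩) (L.take i).toFinset))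
    (k : ℕ) (hk : k ≤ L.length) (S : Finset α) (hS : Indep S) (hcard : S.card ≤ k) :
    f (L.toFinset ∪ S) ≤ f L.toFinset + f (L.take k).toFinset := by
  induction k generalizing S with
  | zero =>
    obtain rfl : S = ∅ := Finset.card_eq_zero.mp (by omega)
    simp [h_zero]
  | succ k ih =>
    have hsucc := toFinset_take_succ L k hk
    rcases Nat.lt_or_ge k S.card with hlt | hle
    · have hGk : (L.take k).toFinset.card < S.card :=
        (List.toFinset_card_le _).trans_lt ((List.length_take_le k L).trans_lt hlt)
      obtain ⟨x, hx, hxI⟩ := h_exch hS (hind k (by omega)) hGk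
      obtain ⟨hxS, hxG⟩ := Finset.mem_sdiff.mp hx
      have hIH := ih (by omega) (S.erase x) (h_down hS (Finset.erase_subset x S))
        (by rw [Finset.card_erase_of_mem hxS]; omega)
      have hgain := hgreedy k hk x hxG hxI
      rw [← hsucc] at hgain
      have hsubG : (L.take k).toFinset ⊆ L.toFinset := fun a ha =>
        List.mem_toFinset.mpr (List.mem_of_mem_take (List.mem_toFinset.mp ha))
      have hsubm := h_sub (L.toFinset ∪ S.erase x) (insert x (L.take k).toFinset)
      have hunion : f (L.toFinset ∪ S) ≤
          f ((L.toFinset ∪ S.erase x) ∪ insert x (L.take k).toFinset) := by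
        apply h_mono
        intro a ha
        simp only [Finset.mem_union, Finset.mem_insert, Finset.mem_erase] at ha ⊢
        tauto
      have hinter : f (L.take k).toFinset ≤
          f ((L.toFinset ∪ S.erase x) ∩ insert x (L.take k).toFinset) :=
        h_mono (Finset.subset_inter (hsubG.trans Finset.subset_union_left)
          (Finset.subset_insert _ _))
      linarith
    · have hIH := ih (by omega) S hS hle
      have hstep : f (L.take k).toFinset ≤ f (L.take (k + 1)).toFinset := by
        rw [hsucc]
        exact h_mono (Finset.subset_insert _ _)
      linarith

/-- Greedy 1/2-approximation for maximizing a monotone submodular function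
subject to matroid constraints. The matroid on the finite ground set is given
by an independence predicate `Indep` satisfying the matroid independence
axioms; the greedy run is recorded as a duplicate-free list `L`: at each step
`i` the picked element `L.get i` is addable to the current set (the first `i`
picks) keeping independence, and maximizes `f` of the augmented set among all
such addable elements; the run stops when no element can be added. Then the
greedy output `G = L.toFinset` is independent and
`f(G) ≥ (1/2) · max { f(S) : S independent }`. -/
theorem greedy_half_approximation {α : Type*} [Fintype α] [DecidableEq α]
    (Indep : Finset α → Prop)
    (h_empty : Indep ∅)
    (h_down : ∀ ⦃A B : Finset α⦄, Indep B → A ⊆ B → Indep A)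
    (h_exch : ∀ ⦃A B : Finset α⦄, Indep A → Indep B → B.card < A.card →
      ∃ x ∈ A \ B, Indep (insert x B))
    (f : Finset α → ℝ)
    (h_mono : ∀ ⦃A B : Finset α⦄, A ⊆ B → f A ≤ f B)
    (h_sub : ∀ A B : Finset α, f (A ∪ B) + f (A ∩ B) ≤ f A + f B)
    (h_zero : f ∅ = 0)
    (L : List α) (hnd : L.Nodup)
    (hstep : ∀ i (hi : i < L.length),
      L.get ⟨i, hi⟩ ∉ (L.take i).toFinset ∧
      Indep (insert (L.get ⟨i, hi⟩) (L.take i).toFinset) ∧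
      ∀ g, g ∉ (L.take i).toFinset → Indep (insert g (L.take i).toFinset) →
        f (insert g (L.take i).toFinset) ≤
          f (insert (L.get ⟨i, hi⟩) (L.take i).toFinset))
    (hterm : ∀ g, g ∉ L.toFinset → ¬ Indep (insert g L.toFinset)) :
    Indep L.toFinset ∧
    ∀ S : Finset α, Indep S → (1/2 : ℝ) * f S ≤ f L.toFinset := by
  have hind : ∀ i ≤ L.length, Indep (L.take i).toFinset := by
    intro i hi
    cases i with
    | zero => simpa using h_empty
    | succ i =>
      rw [toFinset_take_succ L i hi]
      exact (hstep i hi).2.1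
  have hG : Indep L.toFinset := by simpa using hind L.length le_rfl
  refine ⟨hG, fun S hS => ?_⟩
  have hcard : S.card ≤ L.length := by
    rw [← List.toFinset_card_of_nodup hnd]
    by_contra! hlt
    obtain ⟨x, hx, hxI⟩ := h_exch hS hG hlt
    exact hterm x (Finset.mem_sdiff.mp hx).2 hxI
  have hbound := greedy_union_le Indep h_down h_exch f h_mono h_sub h_zero L hind
    (fun i hi => (hstep i hi).2.2) L.length le_rfl S hS hcard
  rw [List.take_length] at hbound
  have hSG : f S ≤ f (L.toFinset ∪ S) := h_mono Finset.subset_union_right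
  linarith
end

section
/- Let τ, X, Y, Z be finitely-valued random variables such that X is conditionally independent of the pair (Y, Z) given τ. Then H(X | τ, Y) = H(X | τ) = H(X | τ, Y, Z), and the conditional mutual information satisfies I(X; τ | Y) ≥ I(X; τ | Y, Z), where I(X; τ | Y) = H(X | Y) − H(X | τ, Y) and I(X; τ | Y, Z) = H(X | Y, Z) − H(X | τ, Y, Z). -/
/-!
Conditional independence says that `P(X = x | τ = s, Y = y, Z = z) = P(X = x | τ = s)` wherever the
left side is defined, and summing over `z` gives the same for `P(X = x | τ = s, Y = y)`. Hence the
three conditional entropies given `τ` have equal contributions from each pair `(s, x)`. The inequality then reduces to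
`H(X | Y, Z) ≤ H(X | Y)`, which for each fixed `x` and `y` is the log-sum inequality
(`log_sum_inequality`) over the values of `Z`.
-/

section

variable {Tτ TX TY TZ : Type*} [Fintype Tτ] [Fintype TX] [Fintype TY] [Fintype TZ]

/-- Marginal `P(τ = s)` of the joint pmf `P` of `(τ, X, Y, Z)`. -/
noncomputable def Pτ (P : Tτ → TX → TY → TZ → ℝ) (s : Tτ) : ℝ :=
  ∑ x, ∑ y, ∑ z, P s x y z

/-- Marginal `P(τ = s, X = x)`. -/
noncomputable def PτX (P : Tτ → TX → TY → TZ → ℝ) (s : Tτ) (x : TX) : ℝ :=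
  ∑ y, ∑ z, P s x y z

/-- Marginal `P(τ = s, Y = y)`. -/
noncomputable def PτY (P : Tτ → TX → TY → TZ → ℝ) (s : Tτ) (y : TY) : ℝ :=
  ∑ x, ∑ z, P s x y z

/-- Marginal `P(τ = s, X = x, Y = y)`. -/
noncomputable def PτXY (P : Tτ → TX → TY → TZ → ℝ) (s : Tτ) (x : TX) (y : TY) : ℝ :=
  ∑ z, P s x y z

/-- Marginal `P(τ = s, Y = y, Z = z)`. -/
noncomputable def PτYZ (P : Tτ → TX → TY → TZ → ℝ) (s : Tτ) (y : TY) (z : TZ) : ℝ :=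
  ∑ x, P s x y z

/-- Marginal `P(X = x, Y = y)`. -/
noncomputable def PXY (P : Tτ → TX → TY → TZ → ℝ) (x : TX) (y : TY) : ℝ :=
  ∑ s, ∑ z, P s x y z

/-- Marginal `P(Y = y)`. -/
noncomputable def PY (P : Tτ → TX → TY → TZ → ℝ) (y : TY) : ℝ :=
  ∑ s, ∑ x, ∑ z, P s x y z

/-- Marginal `P(X = x, Y = y, Z = z)`. -/
noncomputable def PXYZ (P : Tτ → TX → TY → TZ → ℝ) (x : TX) (y : TY) (z : TZ) : ℝ :=
  ∑ s, P s x y z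

/-- Marginal `P(Y = y, Z = z)`. -/
noncomputable def PYZ (P : Tτ → TX → TY → TZ → ℝ) (y : TY) (z : TZ) : ℝ :=
  ∑ s, ∑ x, P s x y z

/-- Conditional entropy `H(X | τ)`. -/
noncomputable def HXcτ (P : Tτ → TX → TY → TZ → ℝ) : ℝ :=
  -∑ s, ∑ x, PτX P s x * Real.log (PτX P s x / Pτ P s)

/-- Conditional entropy `H(X | τ, Y)`. -/
noncomputable def HXcτY (P : Tτ → TX → TY → TZ → ℝ) : ℝ :=
  -∑ s, ∑ x, ∑ y, PτXY P s x y * Real.log (PτXY P s x y / PτY P s y)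

/-- Conditional entropy `H(X | τ, Y, Z)`. -/
noncomputable def HXcτYZ (P : Tτ → TX → TY → TZ → ℝ) : ℝ :=
  -∑ s, ∑ x, ∑ y, ∑ z, P s x y z * Real.log (P s x y z / PτYZ P s y z)

/-- Conditional entropy `H(X | Y)`. -/
noncomputable def HXcY (P : Tτ → TX → TY → TZ → ℝ) : ℝ :=
  -∑ x, ∑ y, PXY P x y * Real.log (PXY P x y / PY P y)

/-- Conditional entropy `H(X | Y, Z)`. -/
noncomputable def HXcYZ (P : Tτ → TX → TY → TZ → ℝ) : ℝ :=
  -∑ x, ∑ y, ∑ z, PXYZ P x y z * Real.log (PXYZ P x y z / PYZ P y z)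

/-- The log-sum inequality, which follows from `log t ≤ t - 1`. -/
theorem log_sum_inequality {ι : Type*} [Fintype ι] (a b : ι → ℝ) (ha : ∀ i, 0 ≤ a i)
    (hab : ∀ i, a i ≤ b i) :
    (∑ i, a i) * Real.log ((∑ i, a i) / ∑ i, b i) ≤ ∑ i, a i * Real.log (a i / b i) := by
  rcases (Finset.sum_nonneg fun i _ => ha i : 0 ≤ ∑ i, a i).eq_or_lt with h | hA
  · have h0 := (Finset.sum_eq_zero_iff_of_nonneg fun i _ => ha i).1 h.symm
    have h1 : ∀ i, a i = 0 := fun i => h0 i (Finset.mem_univ i)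
    simp [h1]
  have hB : 0 < ∑ i, b i := hA.trans_le (Finset.sum_le_sum fun i _ => hab i)
  set A := ∑ i, a i with hAdef
  set B := ∑ i, b i with hBdef
  have key : ∀ i, a i * Real.log (A / B) + (a i - b i * (A / B)) ≤ a i * Real.log (a i / b i) := by
    intro i
    rcases (ha i).eq_or_lt with h | h
    · have : 0 ≤ b i * (A / B) := mul_nonneg ((ha i).trans (hab i)) (by positivity)
      rw [← h]
      linarith
    have hb : 0 < b i := h.trans_le (hab i)
    have h1 := Real.log_le_sub_one_of_pos (show 0 < (A / B) / (a i / b i) by positivity)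
    rw [Real.log_div (by positivity) (by positivity)] at h1
    have h2 := mul_le_mul_of_nonneg_left h1 h.le
    have h3 : a i * ((A / B) / (a i / b i) - 1) = b i * (A / B) - a i := by
      field_simp
    linarith
  have hs := Finset.sum_le_sum fun i (_ : i ∈ Finset.univ) => key i
  rw [Finset.sum_add_distrib, Finset.sum_sub_distrib, ← Finset.sum_mul, ← Finset.sum_mul,
    ← hAdef, ← hBdef, mul_div_cancel₀ A hB.ne'] at hs
  linarith

/-- If the ratios `a / b` and `p / c` agree in cross-multiplied form, they may be exchanged under
the logarithm against the weight `a`; this also covers `b = 0`, where `a` vanishes. -/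
theorem mul_log_div_congr {a b c p : ℝ} (hc : c ≠ 0) (h : a * c = p * b) :
    a * Real.log (a / b) = a * Real.log (p / c) := by
  by_cases hb : b = 0
  · have : a = 0 := by simpa [hb, hc] using h
    simp [this]
  · rw [(div_eq_div_iff hb hc).2 h]

theorem joint_eq_zero_of_Pτ_eq_zero {S : Type*} {P : S → TX → TY → TZ → ℝ}
    (hpos : ∀ s x y z, 0 ≤ P s x y z) {s : S} (h : Pτ P s = 0) (x : TX) (y : TY) (z : TZ) :
    P s x y z = 0 := by
  have hz : ∀ x y, 0 ≤ ∑ z, P s x y z := fun x y => Finset.sum_nonneg fun z _ => hpos s x y z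
  have hy : ∀ x, 0 ≤ ∑ y, ∑ z, P s x y z := fun x => Finset.sum_nonneg fun y _ => hz x y
  have h1 := (Finset.sum_eq_zero_iff_of_nonneg fun x _ => hy x).1 h x (Finset.mem_univ x)
  have h2 := (Finset.sum_eq_zero_iff_of_nonneg fun y _ => hz x y).1 h1 y (Finset.mem_univ y)
  exact (Finset.sum_eq_zero_iff_of_nonneg fun z _ => hpos s x y z).1 h2 z (Finset.mem_univ z)

/-- Conditioning on more information does not increase entropy: `H(X | Y, Z) ≤ H(X | Y)`. -/
theorem HXcYZ_le_HXcY {P : Tτ → TX → TY → TZ → ℝ} (hpos : ∀ s x y z, 0 ≤ P s x y z) :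
    HXcYZ P ≤ HXcY P := by
  unfold HXcYZ HXcY
  refine neg_le_neg (Finset.sum_le_sum fun x _ => Finset.sum_le_sum fun y _ => ?_)
  have hX : PXY P x y = ∑ z, PXYZ P x y z := Finset.sum_comm
  have hY : PY P y = ∑ z, PYZ P y z := by
    unfold PY PYZ
    rw [Finset.sum_comm (s := Finset.univ (α := TZ))]
    exact Finset.sum_congr rfl fun s _ => Finset.sum_comm
  rw [hX, hY]
  refine log_sum_inequality _ _ (fun z => Finset.sum_nonneg fun s _ => hpos s x y z) fun z => ?_
  exact Finset.sum_le_sum fun s _ =>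
    Finset.single_le_sum (f := fun x => P s x y z) (fun x _ => hpos s x y z) (Finset.mem_univ x)

/-- If `X` is conditionally independent of the pair `(Y, Z)` given `τ`, then
`H(X | τ, Y) = H(X | τ) = H(X | τ, Y, Z)`, and consequently
`I(X; τ | Y) ≥ I(X; τ | Y, Z)` where
`I(X; τ | Y) = H(X|Y) − H(X|τ,Y)` and `I(X; τ | Y, Z) = H(X|Y,Z) − H(X|τ,Y,Z)`. -/
theorem condMutualInformation_decreases (P : Tτ → TX → TY → TZ → ℝ)
    (hpos : ∀ s x y z, 0 ≤ P s x y z)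
    (hsum : ∑ s, ∑ x, ∑ y, ∑ z, P s x y z = 1)
    (hCI : ∀ s, 0 < Pτ P s → ∀ x y z,
      P s x y z / Pτ P s = (PτX P s x / Pτ P s) * (PτYZ P s y z / Pτ P s)) :
    HXcτY P = HXcτ P ∧ HXcτ P = HXcτYZ P ∧
    HXcY P - HXcτY P ≥ HXcYZ P - HXcτYZ P := by
  have hmul : ∀ s, Pτ P s ≠ 0 → ∀ x y z, P s x y z * Pτ P s = PτX P s x * PτYZ P s y z := by
    intro s h0 x y z
    have hs : 0 < Pτ P s := lt_of_le_of_ne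
      (Finset.sum_nonneg fun x _ => Finset.sum_nonneg fun y _ => Finset.sum_nonneg fun z _ =>
        hpos s x y z) h0.symm
    have h := hCI s hs x y z
    field_simp at h
    linarith
  have hτYZ : HXcτ P = HXcτYZ P := by
    unfold HXcτ HXcτYZ
    congr 1
    refine Finset.sum_congr rfl fun s _ => Finset.sum_congr rfl fun x _ => ?_
    by_cases h0 : Pτ P s = 0
    · simp [PτX, joint_eq_zero_of_Pτ_eq_zero hpos h0]
    simp only [mul_log_div_congr h0 (hmul s h0 x _ _), ← Finset.sum_mul]
    rfl
  have hτY : HXcτY P = HXcτ P := by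
    unfold HXcτ HXcτY
    congr 1
    refine Finset.sum_congr rfl fun s _ => Finset.sum_congr rfl fun x _ => ?_
    by_cases h0 : Pτ P s = 0
    · simp [PτX, PτXY, joint_eq_zero_of_Pτ_eq_zero hpos h0]
    have hXY : ∀ y, PτXY P s x y * Pτ P s = PτX P s x * PτY P s y := by
      intro y
      have hY : PτY P s y = ∑ z, PτYZ P s y z := Finset.sum_comm
      rw [hY, PτXY, Finset.sum_mul, Finset.mul_sum]
      exact Finset.sum_congr rfl fun z _ => hmul s h0 x y z
    simp only [mul_log_div_congr h0 (hXY _), ← Finset.sum_mul]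
    rfl
  refine ⟨hτY, hτYZ, ?_⟩
  have := HXcYZ_le_HXcY hpos
  linarith

end
end
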